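/- Let $k$ be a field and let $n \ge 1$ and $m \ge 0$ be natural numbers. The ring $T := k[u_1, v_1, \dots, u_n, v_n, w_1, \dots, w_m]/(u_1 v_1 - u_2 v_2, \; u_1 v_1 - u_3 v_3, \; \dots, \; u_1 v_1 - u_n v_n)$ is an integral domain and is integrally closed in its field of fractions (i.e., $T$ is a normal domain). -/

import Mathlib

/-!
Adjoining one factorization of a nonzero element `s` of a normal domain `R` gives a normal domain
`A = R[u, v] / (u v - s)`: the elements `u, v` form a regular sequence, so `A = A[1/u] ∩ A[1/v]`,
and both localizations are Laurent polynomial rings over `R`. Iterating, `R[uᵢ, vᵢ] / (uᵢ vᵢ - s)ᵢ`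
is a normal domain for every finite family of factorizations. The ring `T` is of this form over
the base `k[w₁, …, wₘ][X]`, with `s = X` the common value of the products `uᵢ vᵢ`.
-/

open Function LaurentPolynomial

section NormalityCriterion

theorem pow_dvd_of_pow_dvd_pow_mul {M : Type*} [CommMonoidWithZero M] [IsCancelMulZero M]
    {x y : M} (hx : x ≠ 0) (hxy : ∀ a, x ∣ y * a → x ∣ a) (m n : ℕ) {a : M}
    (h : x ^ n ∣ y ^ m * a) : x ^ n ∣ a := by
  have dvd_of_dvd_pow_mul (k : ℕ) (b : M) (hb : x ∣ y ^ k * b) : x ∣ b := by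
    induction k with
    | zero => simpa using hb
    | succ k ih => exact ih (hxy _ (by rwa [← mul_assoc, ← pow_succ' y]))
  induction n generalizing a with
  | zero => simp
  | succ n ih =>
    obtain ⟨b, rfl⟩ := dvd_of_dvd_pow_mul m a ((dvd_pow_self x n.succ_ne_zero).trans h)
    rw [pow_succ', mul_left_comm] at h
    rw [pow_succ']
    exact mul_dvd_mul_left x (ih ((mul_dvd_mul_iff_left hx).mp h))

variable {A : Type*} [CommRing A]

theorem map_dvd_map_of_isIntegral_div {B : Type*} [CommRing B] [IsDomain B] [IsIntegrallyClosed B]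
    {K : Type*} [Field K] [Algebra A K] [IsFractionRing A K] {φ : A →+* B} (hφ : Injective φ)
    {f g : A} (hg : g ≠ 0) (h : IsIntegral A (algebraMap A K f / algebraMap A K g)) :
    φ g ∣ φ f := by
  let φK : K →+* FractionRing B := IsFractionRing.map hφ
  have φK_algebraMap (a : A) : φK (algebraMap A K a) = algebraMap B _ (φ a) :=
    IsLocalization.map_eq _ a
  obtain ⟨b, hb⟩ := IsIntegrallyClosed.isIntegral_iff.mp
    (h.map_of_comp_eq φ φK (RingHom.ext fun a ↦ (φK_algebraMap a).symm))
  have hφg : algebraMap B (FractionRing B) (φ g) ≠ 0 := by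
    simpa [map_eq_zero_iff φ hφ] using hg
  rw [map_div₀, φK_algebraMap, φK_algebraMap, eq_div_iff hφg, ← map_mul] at hb
  exact Dvd.intro_left b (IsFractionRing.injective B (FractionRing B) hb)

theorem isIntegrallyClosed_of_forall_dvd [IsDomain A]
    (h : ∀ f g : A, g ≠ 0 →
      IsIntegral A (algebraMap A (FractionRing A) f / algebraMap A (FractionRing A) g) → g ∣ f) :
    IsIntegrallyClosed A := by
  refine (isIntegrallyClosed_iff (FractionRing A)).mpr fun {z} hz ↦ ?_
  obtain ⟨f, g, hg, rfl⟩ := IsFractionRing.div_surjective (A := A) z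
  have hg₀ : g ≠ 0 := nonZeroDivisors.ne_zero hg
  obtain ⟨q, rfl⟩ := h f g hg₀ hz
  exact ⟨q, by rw [map_mul, mul_div_cancel_left₀ _ (by simpa using hg₀)]⟩

theorem exists_pow_mul_eq_mul_of_map_dvd_map {B : Type*} [CommRing B] {x : A} {φ : A →+* B}
    (hφ : Injective φ) (hφx : ∀ b, ∃ (n : ℕ) (a : A), φ a = φ x ^ n * b) {f g : A}
    (h : φ g ∣ φ f) :
    ∃ (n : ℕ) (a : A), x ^ n * f = g * a := by
  obtain ⟨b, hb⟩ := h
  obtain ⟨n, a, ha⟩ := hφx b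
  refine ⟨n, a, hφ ?_⟩
  rw [map_mul, map_mul, map_pow, hb, ha, mul_left_comm]

/-- The hypotheses on `φ` and `ψ` say `A ⊆ B ⊆ A[1/x]` and `A ⊆ B' ⊆ A[1/y]`; regularity of the
pair `x, y` makes `A` the intersection of the two normal rings. -/
theorem isIntegrallyClosed_of_regular_pair [IsDomain A] {x y : A} (hx : x ≠ 0)
    (hxy : ∀ a, x ∣ y * a → x ∣ a)
    {B : Type*} [CommRing B] [IsDomain B] [IsIntegrallyClosed B]
    {φ : A →+* B} (hφ : Injective φ) (hφx : ∀ b, ∃ (n : ℕ) (a : A), φ a = φ x ^ n * b)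
    {B' : Type*} [CommRing B'] [IsDomain B'] [IsIntegrallyClosed B']
    {ψ : A →+* B'} (hψ : Injective ψ) (hψy : ∀ b, ∃ (n : ℕ) (a : A), ψ a = ψ y ^ n * b) :
    IsIntegrallyClosed A := by
  refine isIntegrallyClosed_of_forall_dvd fun f g hg hint ↦ ?_
  obtain ⟨n, a, hna⟩ :=
    exists_pow_mul_eq_mul_of_map_dvd_map hφ hφx (map_dvd_map_of_isIntegral_div hφ hg hint)
  obtain ⟨m, b, hmb⟩ :=
    exists_pow_mul_eq_mul_of_map_dvd_map hψ hψy (map_dvd_map_of_isIntegral_div hψ hg hint)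
  have hab : x ^ n * b = y ^ m * a := mul_left_cancel₀ hg <| by
    rw [mul_left_comm, ← hmb, mul_left_comm g, ← hna, mul_left_comm]
  obtain ⟨c, rfl⟩ := pow_dvd_of_pow_dvd_pow_mul hx hxy m n ⟨b, hab.symm⟩
  exact ⟨c, mul_left_cancel₀ (pow_ne_zero n hx) (by rw [hna, mul_left_comm])⟩

end NormalityCriterion

theorem isDomain_and_isIntegrallyClosed_of_ringEquiv {A B : Type*} [CommRing A] [CommRing B]
    (e : A ≃+* B) (h : IsDomain A ∧ IsIntegrallyClosed A) : IsDomain B ∧ IsIntegrallyClosed B :=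
  have := h.2
  ⟨e.toMulEquiv.isDomain_iff.mp h.1, .of_equiv e⟩

theorem isIntegrallyClosed_laurentPolynomial (R : Type*) [CommRing R] [IsDomain R]
    [IsIntegrallyClosed R] : IsIntegrallyClosed R[T;T⁻¹] :=
  isIntegrallyClosed_of_isLocalization _ (.powers (Polynomial.X : Polynomial R))
    (powers_le_nonZeroDivisors_of_noZeroDivisors Polynomial.X_ne_zero)

theorem isIntegrallyClosed_mvPolynomial (R σ : Type*) [CommRing R] [IsDomain R]
    [IsIntegrallyClosed R] [Finite σ] : IsIntegrallyClosed (MvPolynomial σ R) := by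
  induction σ using Finite.induction_empty_option with
  | of_equiv e ih => exact .of_equiv (MvPolynomial.renameEquiv R e).toRingEquiv
  | h_empty => exact .of_equiv (MvPolynomial.isEmptyRingEquiv R PEmpty).symm
  | h_option ih => exact .of_equiv (MvPolynomial.optionEquivLeft R _).symm.toRingEquiv

theorem mem_span_X_image_of_C_mul_mem {R σ : Type*} [CommRing R] [IsDomain R] {s : R}
    (hs : s ≠ 0) {t : Set σ} {p : MvPolynomial σ R}
    (h : MvPolynomial.C s * p ∈ Ideal.span (MvPolynomial.X '' t)) :
    p ∈ Ideal.span (MvPolynomial.X '' t) := by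
  rw [MvPolynomial.mem_ideal_span_X_image] at h ⊢
  rwa [← MvPolynomial.smul_eq_C_mul, MvPolynomial.support_smul_eq hs] at h

section Quotient

variable {P : Type*} [CommRing P] {x y s : P} {I : Ideal P}

theorem quotientMk_mem_nonZeroDivisors (hI : I = Ideal.span {x * y - s})
    (hx : x ∈ nonZeroDivisors P) (hxs : ∀ p, x ∣ s * p → x ∣ p) :
    Ideal.Quotient.mk I x ∈ nonZeroDivisors (P ⧸ I) := by
  subst hI
  refine mem_nonZeroDivisors_iff_right.mpr fun a ha ↦ ?_
  obtain ⟨p, rfl⟩ := Ideal.Quotient.mk_surjective a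
  rw [← map_mul, Ideal.Quotient.eq_zero_iff_dvd] at ha
  obtain ⟨g, hg⟩ := ha
  obtain ⟨g', rfl⟩ := hxs g ⟨y * g - p, by linear_combination hg⟩
  refine (Ideal.Quotient.eq_zero_iff_dvd _ _).mpr
    ⟨g', (mul_cancel_right_mem_nonZeroDivisors hx).mp ?_⟩
  linear_combination hg

theorem quotientMk_dvd_of_dvd_mul (hI : I = Ideal.span {x * y - s})
    (hxy : ∀ p, x ∣ y * p → x ∣ p)
    (hxys : ∀ p, s * p ∈ Ideal.span {x, y} → p ∈ Ideal.span {x, y}) {a : P ⧸ I}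
    (h : Ideal.Quotient.mk I x ∣ Ideal.Quotient.mk I y * a) : Ideal.Quotient.mk I x ∣ a := by
  subst hI
  obtain ⟨p, rfl⟩ := Ideal.Quotient.mk_surjective a
  obtain ⟨b, hb⟩ := h
  obtain ⟨q, rfl⟩ := Ideal.Quotient.mk_surjective b
  rw [← map_mul, ← map_mul, ← sub_eq_zero, ← map_sub, Ideal.Quotient.eq_zero_iff_dvd] at hb
  obtain ⟨g, hg⟩ := hb
  -- Modulo `(x, y)` the relation `hg` reads `s * g ≡ 0`.
  obtain ⟨c, d, rfl⟩ := Ideal.mem_span_pair.mp <| hxys g <|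
    Ideal.mem_span_pair.mpr ⟨q + y * g, -p, by linear_combination -hg⟩
  obtain ⟨e, he⟩ := hxy (p - x * (c * x + d * y) + s * d) ⟨q - s * c, by linear_combination hg⟩
  have hp : p = x * (e + (c * x + d * y) - y * d) + (x * y - s) * d := by linear_combination he
  rw [hp, map_add, map_mul _ (x * y - s), Ideal.Quotient.mk_singleton_self]
  simp

end Quotient

/-- The ideal `(uᵢ vᵢ - s)ᵢ` of `R[uᵢ, vᵢ]`; in the index type `ι ⊕ ι` the first summand stands for
the `uᵢ` and the second for the `vᵢ`. -/
noncomputable def factorizationIdeal (R : Type*) [CommRing R] (s : R) (ι : Type*) :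
    Ideal (MvPolynomial (ι ⊕ ι) R) :=
  Ideal.span (Set.range fun i : ι ↦
    MvPolynomial.X (.inl i) * MvPolynomial.X (.inr i) - MvPolynomial.C s)

/-- The universal `R`-algebra `R[uᵢ, vᵢ] / (uᵢ vᵢ - s)ᵢ` with an `ι`-indexed family of
factorizations of `s` into two factors. -/
def FactorizationRing (R : Type*) [CommRing R] (s : R) (ι : Type*) : Type _ :=
  MvPolynomial (ι ⊕ ι) R ⧸ factorizationIdeal R s ι

namespace FactorizationRing

variable {R : Type*} [CommRing R] {s : R} {ι : Type*}

noncomputable instance : CommRing (FactorizationRing R s ι) := inferInstanceAs (CommRing (_ ⧸ _))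

/-- The quotient map from the polynomial ring in the generators. -/
noncomputable def mk : MvPolynomial (ι ⊕ ι) R →+* FactorizationRing R s ι := Ideal.Quotient.mk _

/-- The structure map of the `R`-algebra `FactorizationRing R s ι`. -/
noncomputable def of : R →+* FactorizationRing R s ι := mk.comp MvPolynomial.C

/-- The first factor `uᵢ` of the `i`-th factorization of `s`. -/
noncomputable def u (i : ι) : FactorizationRing R s ι := mk (MvPolynomial.X (.inl i))

/-- The second factor `vᵢ` of the `i`-th factorization of `s`. -/
noncomputable def v (i : ι) : FactorizationRing R s ι := mk (MvPolynomial.X (.inr i))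

theorem u_mul_v (i : ι) : (u i * v i : FactorizationRing R s ι) = of s :=
  (map_mul mk _ _).symm.trans (Ideal.Quotient.eq.mpr (Ideal.subset_span ⟨i, rfl⟩))

theorem hom_ext {S : Type*} [CommRing S] {f g : FactorizationRing R s ι →+* S}
    (hof : f.comp of = g.comp of) (hu : ∀ i, f (u i) = g (u i)) (hv : ∀ i, f (v i) = g (v i)) :
    f = g :=
  Ideal.Quotient.ringHom_ext (MvPolynomial.ringHom_ext' hof (Sum.rec hu hv))

section lift

variable {S : Type*} [CommRing S] (f : R →+* S) (a b : ι → S) (h : ∀ i, a i * b i = f s)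

/-- The universal property: a family of factorizations `f s = aᵢ bᵢ` in `S` extends `f` to
`FactorizationRing R s ι`. -/
noncomputable def lift : FactorizationRing R s ι →+* S :=
  Ideal.Quotient.lift _ (MvPolynomial.eval₂Hom f (Sum.elim a b)) fun p hp ↦ by
    refine (Ideal.span_le (I := RingHom.ker _)).mpr ?_ hp
    rintro _ ⟨i, rfl⟩
    simp [h i]

@[simp]
theorem lift_of (r : R) : lift f a b h (of r) = f r := MvPolynomial.eval₂Hom_C f _ r

@[simp]
theorem lift_u (i : ι) : lift f a b h (u i) = a i := MvPolynomial.eval₂Hom_X' f _ _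

@[simp]
theorem lift_v (i : ι) : lift f a b h (v i) = b i := MvPolynomial.eval₂Hom_X' f _ _

end lift

section Unique

variable [Unique ι]

theorem factorizationIdeal_eq_span_singleton : factorizationIdeal R s ι = Ideal.span
    {MvPolynomial.X (.inl default) * MvPolynomial.X (.inr default) - MvPolynomial.C s} := by
  rw [factorizationIdeal, Set.range_unique]

variable [IsDomain R]

theorem u_mem_nonZeroDivisors (hs : s ≠ 0) :
    u default ∈ nonZeroDivisors (FactorizationRing R s ι) := by
  refine quotientMk_mem_nonZeroDivisors factorizationIdeal_eq_span_singleton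
    (mem_nonZeroDivisors_of_ne_zero (MvPolynomial.X_ne_zero _)) fun p hp ↦ ?_
  rw [← Ideal.mem_span_singleton, ← Set.image_singleton] at hp ⊢
  exact mem_span_X_image_of_C_mul_mem hs hp

theorem u_dvd_of_u_dvd_v_mul (hs : s ≠ 0) {a : FactorizationRing R s ι}
    (h : u default ∣ v default * a) : u default ∣ a := by
  refine quotientMk_dvd_of_dvd_mul factorizationIdeal_eq_span_singleton (fun p hp ↦ ?_)
    (fun p hp ↦ ?_) h
  · exact (MvPolynomial.X_prime.dvd_or_dvd hp).resolve_left (by simp [MvPolynomial.X_dvd_X])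
  · rw [← Set.image_pair] at hp ⊢
    exact mem_span_X_image_of_C_mul_mem hs hp

end Unique

/-- The involution exchanging every `uᵢ` with `vᵢ`. -/
noncomputable def swap : FactorizationRing R s ι →+* FactorizationRing R s ι :=
  lift of v u fun i ↦ by rw [mul_comm, u_mul_v]

@[simp]
theorem swap_of (r : R) : swap (of r : FactorizationRing R s ι) = of r := lift_of ..

@[simp]
theorem swap_u (i : ι) : swap (u i : FactorizationRing R s ι) = v i := lift_u ..

@[simp]
theorem swap_v (i : ι) : swap (v i : FactorizationRing R s ι) = u i := lift_v ..

theorem swap_involutive : Involutive (swap : FactorizationRing R s ι →+* _) :=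
  RingHom.congr_fun (f := swap.comp swap) (g := .id _) <|
    hom_ext (RingHom.ext fun r ↦ by simp) (by simp) (by simp)

/-- The homomorphism `uᵢ ↦ T`, `vᵢ ↦ s T⁻¹`. For a single index it is the localization at `u`. -/
noncomputable def toLaurent : FactorizationRing R s ι →+* R[T;T⁻¹] :=
  lift C (fun _ ↦ T 1) (fun _ ↦ C s * T (-1)) fun _ ↦ by
    rw [mul_left_comm, ← T_add, add_neg_cancel, T_zero, mul_one]

@[simp]
theorem toLaurent_of (r : R) : toLaurent (of r : FactorizationRing R s ι) = C r := lift_of ..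

@[simp]
theorem toLaurent_u (i : ι) : toLaurent (u i : FactorizationRing R s ι) = T 1 := lift_u ..

@[simp]
theorem toLaurent_v (i : ι) : toLaurent (v i : FactorizationRing R s ι) = C s * T (-1) :=
  lift_v ..

theorem exists_toLaurent_eq_T_one_pow_mul [Nonempty ι] (l : R[T;T⁻¹]) :
    ∃ (n : ℕ) (a : FactorizationRing R s ι), toLaurent a = T 1 ^ n * l := by
  obtain ⟨i⟩ := ‹Nonempty ι›
  obtain ⟨n, p, hp⟩ := exists_T_pow l
  have toLaurent_comp_eval₂ : toLaurent.comp (Polynomial.eval₂RingHom of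
      (u i : FactorizationRing R s ι)) = Polynomial.toLaurent := by
    ext <;> simp
  refine ⟨n, p.eval₂ of (u i), ?_⟩
  rw [T_pow, mul_one, T_mul, ← hp]
  exact RingHom.congr_fun toLaurent_comp_eval₂ p

theorem toLaurent_injective [Unique ι] [IsDomain R] (hs : s ≠ 0) :
    Injective (toLaurent : FactorizationRing R s ι →+* R[T;T⁻¹]) := by
  let F := FactorizationRing R s ι
  let L := Localization.Away (u default : F)
  let x : Lˣ := (IsLocalization.Away.algebraMap_isUnit (S := L) (u default : F)).unit
  have hx : (x : L) = algebraMap F L (u default) := rfl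
  let ofLaurent : R[T;T⁻¹] →+* L := eval₂ ((algebraMap F L).comp of) x
  have ofLaurent_comp_toLaurent : ofLaurent.comp toLaurent = algebraMap F L := by
    refine hom_ext (RingHom.ext fun r ↦ ?_) (fun i ↦ ?_) fun i ↦ ?_
    · simp [ofLaurent]
    · simp [ofLaurent, hx, Unique.eq_default i]
    · simp [ofLaurent, Unique.eq_default i, Units.mul_inv_eq_iff_eq_mul, hx, ← map_mul,
        ← u_mul_v default, mul_comm (u default)]
  refine Injective.of_comp (f := ofLaurent) ?_
  rw [← RingHom.coe_comp, ofLaurent_comp_toLaurent]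
  exact IsLocalization.injective L (Submonoid.powers_le.mpr (u_mem_nonZeroDivisors hs))

theorem isDomain_and_isIntegrallyClosed_of_unique [Unique ι] [IsDomain R] [IsIntegrallyClosed R]
    (hs : s ≠ 0) :
    IsDomain (FactorizationRing R s ι) ∧ IsIntegrallyClosed (FactorizationRing R s ι) := by
  have hinj := toLaurent_injective (ι := ι) hs
  have hdom := hinj.isDomain
  have := isIntegrallyClosed_laurentPolynomial R
  refine ⟨hdom, isIntegrallyClosed_of_regular_pair (x := u default) (y := v default)
    (φ := toLaurent) (ψ := toLaurent.comp swap)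
    (nonZeroDivisors.ne_zero (u_mem_nonZeroDivisors hs)) (fun _ ↦ u_dvd_of_u_dvd_v_mul hs)
    hinj (fun l ↦ ?_) (hinj.comp swap_involutive.injective) fun l ↦ ?_⟩
  · simpa using exists_toLaurent_eq_T_one_pow_mul l
  · obtain ⟨n, a, ha⟩ := exists_toLaurent_eq_T_one_pow_mul (s := s) (ι := ι) l
    exact ⟨n, swap a, by simp only [RingHom.comp_apply, swap_involutive a, ha, swap_v, toLaurent_u]⟩

/-- Reindexing the family of factorizations. -/
noncomputable def congr {κ : Type*} (e : ι ≃ κ) :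
    FactorizationRing R s ι ≃+* FactorizationRing R s κ :=
  .ofRingHom (lift of (u ∘ e) (v ∘ e) fun i ↦ u_mul_v (e i))
    (lift of (u ∘ e.symm) (v ∘ e.symm) fun i ↦ u_mul_v (e.symm i))
    (hom_ext (RingHom.ext fun r ↦ by simp) (by simp) (by simp))
    (hom_ext (RingHom.ext fun r ↦ by simp) (by simp) (by simp))

/-- The empty family of factorizations adds nothing to `R`. -/
noncomputable def equivOfIsEmpty [IsEmpty ι] : R ≃+* FactorizationRing R s ι :=
  .ofRingHom of (lift (.id R) isEmptyElim isEmptyElim isEmptyElim)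
    (hom_ext (RingHom.ext fun r ↦ by simp) isEmptyElim isEmptyElim) (RingHom.ext fun r ↦ by simp)

/-- Factorizations indexed by `Option ι` are adjoined in two steps: first the family indexed by
`ι`, then the factorization of index `none`. -/
noncomputable def optionEquiv :
    FactorizationRing R s (Option ι) ≃+*
      FactorizationRing (FactorizationRing R s ι) (of s) Unit :=
  .ofRingHom
    (lift (of.comp of) (Option.elim · (u ()) (of ∘ u)) (Option.elim · (v ()) (of ∘ v)) <| by
      rintro (_ | i)
      · exact u_mul_v ()
      · simp [← map_mul, u_mul_v])
    (lift (lift of (u ∘ some) (v ∘ some) fun i ↦ u_mul_v (some i)) (fun _ ↦ u none)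
      (fun _ ↦ v none) fun _ ↦ by rw [lift_of, u_mul_v])
    (hom_ext (hom_ext (RingHom.ext fun r ↦ by simp) (by simp) (by simp)) (by simp) (by simp))
    (hom_ext (RingHom.ext fun r ↦ by simp) (by rintro (_ | i) <;> simp)
      (by rintro (_ | i) <;> simp))

theorem of_ne_zero (hs : s ≠ 0) : (of s : FactorizationRing R s ι) ≠ 0 := by
  intro h
  have := congr_arg (lift (.id R) (fun _ ↦ s) (fun _ ↦ 1) (fun _ ↦ mul_one s)) h
  simp [hs] at this

theorem isDomain_and_isIntegrallyClosed [Finite ι] [IsDomain R] [IsIntegrallyClosed R]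
    (hs : s ≠ 0) :
    IsDomain (FactorizationRing R s ι) ∧ IsIntegrallyClosed (FactorizationRing R s ι) := by
  induction ι using Finite.induction_empty_option with
  | of_equiv e ih => exact isDomain_and_isIntegrallyClosed_of_ringEquiv (congr e) ih
  | h_empty => exact isDomain_and_isIntegrallyClosed_of_ringEquiv equivOfIsEmpty ⟨‹_›, ‹_›⟩
  | h_option ih =>
    obtain ⟨_, _⟩ := ih
    exact isDomain_and_isIntegrallyClosed_of_ringEquiv optionEquiv.symm
      (isDomain_and_isIntegrallyClosed_of_unique (of_ne_zero hs))

end FactorizationRing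

section CommonProduct

variable (R κ : Type*) [CommRing R] {ι : Type*} (i₀ : ι)

/-- The ideal of `R[uᵢ, vᵢ, wⱼ]` that makes all the products `uᵢ vᵢ` equal, generated by their
differences with the product of index `i₀`. The index type `ι ⊕ ι ⊕ κ` lists the `uᵢ`, then the
`vᵢ`, then the `wⱼ`. -/
noncomputable def commonProductIdeal : Ideal (MvPolynomial (ι ⊕ ι ⊕ κ) R) :=
  Ideal.span (Set.range fun i ↦ MvPolynomial.X (.inl i₀) * MvPolynomial.X (.inr (.inl i₀)) -
    MvPolynomial.X (.inl i) * MvPolynomial.X (.inr (.inl i)))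

/-- The universal ring over `R[wⱼ]` with elements `uᵢ, vᵢ` all of whose products `uᵢ vᵢ` agree. -/
def CommonProductRing : Type _ := MvPolynomial (ι ⊕ ι ⊕ κ) R ⧸ commonProductIdeal R κ i₀

namespace CommonProductRing

noncomputable instance : CommRing (CommonProductRing R κ i₀) := inferInstanceAs (CommRing (_ ⧸ _))

variable {R κ i₀}

/-- The quotient map from the polynomial ring in the generators. -/
noncomputable def mk : MvPolynomial (ι ⊕ ι ⊕ κ) R →+* CommonProductRing R κ i₀ :=
  Ideal.Quotient.mk _

theorem mk_mul_eq_mk_mul (i : ι) :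
    (mk (.X (.inl i)) * mk (.X (.inr (.inl i))) : CommonProductRing R κ i₀) =
      mk (.X (.inl i₀)) * mk (.X (.inr (.inl i₀))) := by
  rw [← map_mul, ← map_mul, eq_comm]
  exact (Ideal.Quotient.eq (I := commonProductIdeal R κ i₀)).mpr (Ideal.subset_span ⟨i, rfl⟩)

open FactorizationRing

/-- The homomorphism fixing every `uᵢ`, `vᵢ` and `wⱼ`. -/
noncomputable def toFactorizationRing : CommonProductRing R κ i₀ →+*
    FactorizationRing (Polynomial (MvPolynomial κ R)) Polynomial.X ι :=
  Ideal.Quotient.lift _ (MvPolynomial.eval₂Hom (of.comp (Polynomial.C.comp MvPolynomial.C))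
    (Sum.elim u (Sum.elim v fun j ↦ of (Polynomial.C (MvPolynomial.X j))))) fun p hp ↦ by
      refine (Ideal.span_le (I := RingHom.ker _)).mpr ?_ hp
      rintro _ ⟨i, rfl⟩
      simp [u_mul_v]

theorem toFactorizationRing_mk (p : MvPolynomial (ι ⊕ ι ⊕ κ) R) :
    toFactorizationRing (mk p : CommonProductRing R κ i₀) =
      p.eval₂ (of.comp (Polynomial.C.comp MvPolynomial.C))
        (Sum.elim u (Sum.elim v fun j ↦ of (Polynomial.C (.X j : MvPolynomial κ R)))) := rfl

/-- The homomorphism fixing every `uᵢ`, `vᵢ` and `wⱼ`, and sending the polynomial variable to the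
common product. -/
noncomputable def ofFactorizationRing :
    FactorizationRing (Polynomial (MvPolynomial κ R)) Polynomial.X ι →+*
      CommonProductRing R κ i₀ :=
  lift
    (Polynomial.eval₂RingHom (mk.comp (MvPolynomial.rename (.inr ∘ .inr)).toRingHom)
      (mk (.X (.inl i₀)) * mk (.X (.inr (.inl i₀)))))
    (fun i ↦ mk (.X (.inl i))) (fun i ↦ mk (.X (.inr (.inl i)))) fun i ↦ by
      simpa using mk_mul_eq_mk_mul i

/-- The common product, which is not among the generators of `CommonProductRing`, becomes the
polynomial variable. -/
noncomputable def equivFactorizationRing : CommonProductRing R κ i₀ ≃+*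
    FactorizationRing (Polynomial (MvPolynomial κ R)) Polynomial.X ι :=
  .ofRingHom toFactorizationRing ofFactorizationRing
    (hom_ext
      (by ext <;> simp [ofFactorizationRing, toFactorizationRing_mk, u_mul_v])
      (by simp [ofFactorizationRing, toFactorizationRing_mk])
      (by simp [ofFactorizationRing, toFactorizationRing_mk]))
    (Ideal.Quotient.ringHom_ext <| MvPolynomial.ringHom_ext'
      (RingHom.ext fun r ↦ show ofFactorizationRing (toFactorizationRing (mk (.C r))) = mk (.C r) by
        simp [ofFactorizationRing, toFactorizationRing_mk])
      fun i ↦ show ofFactorizationRing (toFactorizationRing (mk (.X i))) = mk (.X i) by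
        rcases i with i | i | j <;> simp [ofFactorizationRing, toFactorizationRing_mk])

end CommonProductRing

end CommonProduct

theorem statement5_general (R κ : Type*) [CommRing R] [IsDomain R] [IsIntegrallyClosed R]
    {ι : Type*} [Finite ι] [Finite κ] (i₀ : ι) :
    IsDomain (CommonProductRing R κ i₀) ∧ IsIntegrallyClosed (CommonProductRing R κ i₀) :=
  have := isIntegrallyClosed_mvPolynomial R κ
  isDomain_and_isIntegrallyClosed_of_ringEquiv CommonProductRing.equivFactorizationRing.symm
    (FactorizationRing.isDomain_and_isIntegrallyClosed Polynomial.X_ne_zero)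

/-- Let `k` be a field and `n ≥ 1`, `m ≥ 0`.  The ring
`T := k[u_1, v_1, …, u_n, v_n, w_1, …, w_m] / (u_1 v_1 - u_2 v_2, …, u_1 v_1 - u_n v_n)`
is an integral domain and is integrally closed in its field of fractions, i.e. `T` is a
normal domain.  Variables are indexed by `Fin n ⊕ Fin n ⊕ Fin m`, with the `u`'s indexed
by the first summand, the `v`'s by the second and the `w`'s by the third.  (The relations
`u_1 v_1 - u_i v_i` are recorded for all `i`; for `i = 1` this contributes only the zero
element, so for `n = 1` the ideal is the zero ideal.) -/
theorem statement5 (k : Type*) [Field k] (n m : ℕ) (hn : 1 ≤ n) :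
    letI σ := (Fin n ⊕ Fin n ⊕ Fin m)
    letI A := MvPolynomial σ k
    letI u : Fin n → A := fun i => MvPolynomial.X (Sum.inl i)
    letI v : Fin n → A := fun i => MvPolynomial.X (Sum.inr (Sum.inl i))
    letI I : Ideal A := Ideal.span
      (Set.range fun i : Fin n => u ⟨0, hn⟩ * v ⟨0, hn⟩ - u i * v i)
    IsDomain (A ⧸ I) ∧ IsIntegrallyClosed (A ⧸ I) :=
  statement5_general k (Fin m) (⟨0, hn⟩ : Fin n)
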